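/- arXiv:2403.00654 — 2 statements merged into one kernel-verified Lean document; each statement's English description precedes it below -/
import Mathlib

section
/- For every subset S of a topological space (X, τ), the δP-closure of S satisfies Pcl_δ(S) = S ∪ cl(int_δ(S)), where cl denotes topological closure. -/
open Set

variable {X : Type*}

/-- The δ-closure of a set `S`: points `x` such that every open set `A` containing `x`
satisfies `S ∩ interior (closure A) ≠ ∅`. -/
def deltaCl [TopologicalSpace X] (S : Set X) : Set X :=
  {x | ∀ A : Set X, IsOpen A → x ∈ A → (S ∩ interior (closure A)).Nonempty}

/-- The δ-interior of `S` is the complement of the δ-closure of the complement. -/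
def deltaInt [TopologicalSpace X] (S : Set X) : Set X := (deltaCl Sᶜ)ᶜ

/-- `S` is δP-open if `S ⊆ int (cl_δ S)`. -/
def DeltaPOpen [TopologicalSpace X] (S : Set X) : Prop := S ⊆ interior (deltaCl S)

/-- `S` is δP-closed if its complement is δP-open. -/
def DeltaPClosed [TopologicalSpace X] (S : Set X) : Prop := DeltaPOpen Sᶜ

/-- The δP-closure / δP-upper approximation of `S`:
the intersection of all δP-closed sets containing `S`. -/
def PclDelta [TopologicalSpace X] (S : Set X) : Set X := ⋂₀ {W | DeltaPClosed W ∧ S ⊆ W}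

/-- The δP-interior / δP-lower approximation of `S`:
the union of all δP-open sets contained in `S`. -/
def PintDelta [TopologicalSpace X] (S : Set X) : Set X := ⋃₀ {V | DeltaPOpen V ∧ V ⊆ S}

/-- `S` is preopen if `S ⊆ int (cl S)`. -/
def PreOpen [TopologicalSpace X] (S : Set X) : Prop := S ⊆ interior (closure S)

/-- `S` is preclosed if its complement is preopen. -/
def PreClosed [TopologicalSpace X] (S : Set X) : Prop := PreOpen Sᶜ

/-- The P-lower approximation of `S`: the union of all preopen sets contained in `S`. -/
def PLower [TopologicalSpace X] (S : Set X) : Set X := ⋃₀ {V | PreOpen V ∧ V ⊆ S}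

/-- The P-upper approximation of `S`: the intersection of all preclosed sets containing `S`. -/
def PUpper [TopologicalSpace X] (S : Set X) : Set X := ⋂₀ {W | PreClosed W ∧ S ⊆ W}

/-!
Complementation turns the claim into `PintDelta T = T ∩ interior (deltaCl T)` for `T = Sᶜ`.
Every δP-open subset of `T` lies in the right-hand side because `deltaCl` is monotone. The
right-hand side is itself δP-open: `U = interior (deltaCl T)` is regular open, since `deltaCl T` is
closed, and for regular open `U` every point of `U ∩ deltaCl T` remains in `deltaCl (T ∩ U)`.
-/

section

variable [TopologicalSpace X] {S T U : Set X}

theorem deltaCl_mono (h : S ⊆ T) : deltaCl S ⊆ deltaCl T :=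
  fun _ hx A hA hxA => (hx A hA hxA).mono (inter_subset_inter_left _ h)

theorem isClosed_deltaCl (S : Set X) : IsClosed (deltaCl S) := by
  refine isClosed_of_closure_subset fun x hx A hA hxA => ?_
  obtain ⟨y, hyA, hy⟩ := mem_closure_iff.1 hx A hA hxA
  exact hy A hA hyA

theorem inter_deltaCl_subset_deltaCl_inter_interior_closure (hU : IsOpen U) (S : Set X) :
    U ∩ deltaCl S ⊆ deltaCl (S ∩ interior (closure U)) := by
  rintro x ⟨hxU, hx⟩ A hA hxA
  obtain ⟨y, hyS, hy⟩ := hx (A ∩ U) (hA.inter hU) ⟨hxA, hxU⟩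
  have hyA : y ∈ interior (closure A) := interior_mono (closure_mono inter_subset_left) hy
  have hyU : y ∈ interior (closure U) := interior_mono (closure_mono inter_subset_right) hy
  exact ⟨y, ⟨hyS, hyU⟩, hyA⟩

theorem interior_closure_interior_deltaCl (S : Set X) :
    interior (closure (interior (deltaCl S))) = interior (deltaCl S) := by
  simpa only [(isClosed_deltaCl S).closure_eq] using interior_closure_idem (s := deltaCl S)

theorem deltaPOpen_inter_interior_deltaCl (S : Set X) :
    DeltaPOpen (S ∩ interior (deltaCl S)) := by
  have hsub : interior (deltaCl S) ⊆ deltaCl (S ∩ interior (deltaCl S)) := by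
    have h := inter_deltaCl_subset_deltaCl_inter_interior_closure
      (isOpen_interior (s := deltaCl S)) S
    rwa [inter_eq_left.2 interior_subset, interior_closure_interior_deltaCl] at h
  exact inter_subset_right.trans (interior_maximal hsub isOpen_interior)

theorem DeltaPOpen.subset_interior_deltaCl (hS : DeltaPOpen S) (hST : S ⊆ T) :
    S ⊆ interior (deltaCl T) :=
  hS.trans (interior_mono (deltaCl_mono hST))

theorem pintDelta_eq_inter_interior_deltaCl (S : Set X) :
    PintDelta S = S ∩ interior (deltaCl S) := by
  apply Subset.antisymm
  · exact sUnion_subset fun V ⟨hV, hVS⟩ => subset_inter hVS (hV.subset_interior_deltaCl hVS)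
  · exact subset_sUnion_of_mem ⟨deltaPOpen_inter_interior_deltaCl S, inter_subset_left⟩

theorem compl_pintDelta_compl (S : Set X) : (PintDelta Sᶜ)ᶜ = PclDelta S := by
  simp only [PintDelta, PclDelta, DeltaPClosed, compl_sUnion, compl_image_ofPred,
    compl_subset_compl]

theorem closure_deltaInt (S : Set X) : closure (deltaInt S) = (interior (deltaCl Sᶜ))ᶜ :=
  closure_compl

end

theorem pclDelta_eq_union_closure_deltaInt [TopologicalSpace X] (S : Set X) :
    PclDelta S = S ∪ closure (deltaInt S) :=
  calc PclDelta S
    _ = (PintDelta Sᶜ)ᶜ := (compl_pintDelta_compl S).symm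
    _ = (Sᶜ ∩ interior (deltaCl Sᶜ))ᶜ := by rw [pintDelta_eq_inter_interior_deltaCl]
    _ = S ∪ (interior (deltaCl Sᶜ))ᶜ := by rw [compl_inter, compl_compl]
    _ = S ∪ closure (deltaInt S) := by rw [closure_deltaInt]
end

section
/- For every subset S of a topological space (X, τ), the chain of inclusions int(S) ⊆ L_P(S) ⊆ L_δP(S) ⊆ S ⊆ U_δP(S) ⊆ U_P(S) ⊆ cl(S) holds, where int and cl are topological interior and closure. -/
open Set

variable {X : Type*}

section

variable [TopologicalSpace X]

theorem closure_subset_deltaCl (S : Set X) : closure S ⊆ deltaCl S := by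
  intro x hx A hA hxA
  have hSA : (A ∩ S).Nonempty := mem_closure_iff.1 hx A hA hxA
  rw [inter_comm] at hSA
  exact hSA.mono (inter_subset_inter_right S hA.subset_interior_closure)

theorem preOpen_of_isOpen {U : Set X} (hU : IsOpen U) : PreOpen U :=
  hU.subset_interior_closure

theorem preClosed_of_isClosed {F : Set X} (hF : IsClosed F) : PreClosed F :=
  preOpen_of_isOpen hF.isOpen_compl

theorem PreOpen.deltaPOpen {V : Set X} (hV : PreOpen V) : DeltaPOpen V :=
  hV.trans (interior_mono (closure_subset_deltaCl V))

theorem PreClosed.deltaPClosed {W : Set X} (hW : PreClosed W) : DeltaPClosed W :=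
  PreOpen.deltaPOpen hW

theorem interior_subset_pLower (S : Set X) : interior S ⊆ PLower S :=
  subset_sUnion_of_mem ⟨preOpen_of_isOpen isOpen_interior, interior_subset⟩

theorem pLower_subset_pintDelta (S : Set X) : PLower S ⊆ PintDelta S :=
  sUnion_subset_sUnion fun _ ⟨hV, hVS⟩ => ⟨hV.deltaPOpen, hVS⟩

theorem pintDelta_subset (S : Set X) : PintDelta S ⊆ S :=
  sUnion_subset fun _ ⟨_, hVS⟩ => hVS

theorem subset_pclDelta (S : Set X) : S ⊆ PclDelta S :=
  subset_sInter fun _ ⟨_, hSW⟩ => hSW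

theorem pclDelta_subset_pUpper (S : Set X) : PclDelta S ⊆ PUpper S :=
  sInter_subset_sInter fun _ ⟨hW, hSW⟩ => ⟨hW.deltaPClosed, hSW⟩

theorem pUpper_subset_closure (S : Set X) : PUpper S ⊆ closure S :=
  sInter_subset_of_mem ⟨preClosed_of_isClosed isClosed_closure, subset_closure⟩

end

theorem approx_chain [TopologicalSpace X] (S : Set X) :
    interior S ⊆ PLower S ∧ PLower S ⊆ PintDelta S ∧ PintDelta S ⊆ S ∧
      S ⊆ PclDelta S ∧ PclDelta S ⊆ PUpper S ∧ PUpper S ⊆ closure S :=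
  ⟨interior_subset_pLower S, pLower_subset_pintDelta S, pintDelta_subset S,
    subset_pclDelta S, pclDelta_subset_pUpper S, pUpper_subset_closure S⟩
end
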